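/- arXiv:1801.01046 — 2 statements merged into one kernel-verified Lean document; each statement's English description precedes it below -/
import Mathlib

section
/- (Weierstrass division over a test ring.) Let A be a test ring with maximal ideal m, and let q ∈ A[t] be a monic polynomial of degree d all of whose coefficients of q − tᵈ lie in m. Then for every g ∈ A[[t]] there exists a unique pair (a,b) with a ∈ A[[t]], b ∈ A[t] a polynomial of degree < d, and g = a·q + b. -/
open IsLocalRing

/-!
The hypotheses say that `q` is a distinguished polynomial with respect to the maximal ideal `m`,
so its reduction mod `m` has order `d` and its `d`-th coefficient is `1`. Since `m` is nilpotent,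
the `m`-adic topology on `A` is discrete, hence `A` is `m`-adically complete. Existence and
uniqueness are then Weierstrass division by `q` over an adically complete ring,
`isWeierstrassDivisionAt_div_mod` and `eq_of_mul_add_eq_mul_add` in the namespace
`PowerSeries.IsWeierstrassDivisorAt`.
-/

theorem isAdicComplete_of_isNilpotent {R : Type*} [CommRing R] {I : Ideal R}
    (hI : IsNilpotent I) : IsAdicComplete I R := by
  obtain ⟨n, hn⟩ := hI
  refine { haus' := fun x hx ↦ ?_, prec' := fun f hf ↦ ⟨f n, fun m ↦ ?_⟩ }
  · simpa [SModEq.zero, hn] using hx n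
  · rcases le_total m n with h | h
    · exact hf h
      -- beyond `n` the Cauchy sequence is constant, because `I ^ n = 0`
    · have h0 : f n = f m := by simpa [SModEq.sub_mem, hn, sub_eq_zero] using hf h
      rw [h0]

/-- **Weierstrass division over a test ring.**
Let `A` be a test ring (a local commutative `k`-algebra with nilpotent maximal ideal `m`
and residue field `k`), and let `q ∈ A[t]` be a monic polynomial of degree `d` all of whose
coefficients of `q − tᵈ` lie in `m`.  Then for every `g ∈ A[[t]]` there is a unique pair
`(a, b)` with `a ∈ A[[t]]`, `b ∈ A[t]` of degree `< d`, and `g = a·q + b`. -/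
theorem weierstrass_division_test_ring {k : Type*} [Field k]
    (A : Type*) [CommRing A] [Algebra k A] [IsLocalRing A]
    (hnil : IsNilpotent (maximalIdeal A))
    (hres : Function.Bijective (algebraMap k (ResidueField A)))
    (d : ℕ) (q : Polynomial A) (hq : q.Monic) (hqd : q.natDegree = d)
    (hqm : ∀ i, (q - Polynomial.X ^ d).coeff i ∈ maximalIdeal A)
    (g : PowerSeries A) :
    ∃! ab : PowerSeries A × Polynomial A,
      ab.2.degree < (d : ℕ) ∧ g = ab.1 * (q : PowerSeries A) + (ab.2 : PowerSeries A) := by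
  have := isAdicComplete_of_isNilpotent hnil
  have hdist : q.IsDistinguishedAt (maximalIdeal A) :=
    { mem := fun {i} hi ↦ by
        simpa [Polynomial.coeff_X_pow, (hqd ▸ hi).ne] using hqm i
      monic := hq }
  have hne : maximalIdeal A ≠ ⊤ := Ideal.IsPrime.ne_top'
  have H := hdist.isWeierstrassDivisorAt hne
  have hord : ((q : PowerSeries A).map (Ideal.Quotient.mk (maximalIdeal A))).order.toNat = d := by
    have h := congr(ENat.toNat $(hdist.coe_natDegree_eq_order_map (q : PowerSeries A) 1
      (by rwa [PowerSeries.constantCoeff_one, ← Ideal.ne_top_iff_one]) (by simp)))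
    simpa [hqd] using h.symm
  have hdiv := H.isWeierstrassDivisionAt_div_mod g
  refine ⟨(H.div g, H.mod g), ⟨hord ▸ hdiv.degree_lt, ?_⟩, ?_⟩
  · rw [mul_comm]
    exact hdiv.eq_mul_add
  · rintro ⟨a, b⟩ ⟨hb, hab⟩
    obtain ⟨h1, h2⟩ := H.eq_of_mul_add_eq_mul_add (q := a) (q' := H.div g) (r := b)
      (by rw [hord]; exact hb) hdiv.degree_lt
      (by rw [mul_comm, ← hdiv.eq_mul_add]; exact hab.symm)
    exact Prod.ext h1 h2
end

section
/- (The fiber of the Newton groupoid over a point of the different is a group.) Fix an integer r ≥ 2 and a point (x₀,y₀) ∈ kⁿ × kˡ with f(x₀,y₀) = 0 and Q(x₀,y₀) = 0. For a commutative k-algebra R set G(R) := {(ξ,η) ∈ Rⁿ × Rˡ : η + Ĉ(x₀,y₀)·u(x₀,y₀,ξ,η) = 0 and v(x₀,y₀,ξ,η) ∈ R^×}. Then the operation (ξ̃,η̃)∘(ξ,η) := (ξ + v(x₀,y₀,ξ,η)^{r}·ξ̃, η + v(x₀,y₀,ξ,η)^{r-1}·η̃) maps G(R) × G(R) into G(R)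 and makes G(R) a group with identity element (0,0). -/
/-!
The fiber over `(x₀,y₀)` is the isotropy group of a groupoid whose arrows are Newton steps
`z ↦ z' = (x + Q^r ξ, y + Q^(r-1) η)`, and composition of displacements is performing two steps
in succession. Over a domain where `Q = Q(z)` can be cancelled this gives, with
`E = (C(z') - C(z)) / Q` (polynomial because `r - 1 ≥ 1`) and `v`, `u` the data of the first step
`b`, `ṽ`, `ũ` the data at `z'` of the second step `a = (ξ̃,η̃)`,

* `v(a ∘ b) = v ṽ`,
* `u(a ∘ b) = u + v^r ũ + v^(r-1) E η̃`,
* `Ĉ(z) E Ĉ(z') = v Ĉ(z) - Ĉ(z')`, obtained by multiplying `C(z') = C(z) + Q E` by the adjugates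
  on both sides and using `Q(z') = Q v`.

These hold for the generic point and generic displacements (`newton_cocycle_domain`), so they
specialize to any `k`-algebra; at a zero of `Q` one has `z' = z` (`newton_cocycle`). There `v` is
multiplicative, which yields associativity. The third relation reads `Ĉ E Ĉ = (v - 1) Ĉ`, hence
`Ĉ E η̃ = (v - 1) η̃` as soon as `η̃` lies in the image of `Ĉ`. The defect `δ = η + Ĉ u` then satisfies
`δ(a ∘ b) = δ(b) + v^r δ(a)` (`newton_defect`), which gives closure under composition, and also
that the formal inverse `(-v^(-r) ξ, -v^(-(r-1)) η)` of a point of the fiber has zero defect.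
-/

open MvPolynomial Matrix

noncomputable section

/-- The `l×l` Jacobian matrix `C(x,y)` of `f` with respect to the `y`-variables. -/
def jacC {k : Type*} [Field k] {n l : ℕ} (f : Fin l → MvPolynomial (Fin n ⊕ Fin l) k) :
    Matrix (Fin l) (Fin l) (MvPolynomial (Fin n ⊕ Fin l) k) :=
  Matrix.of fun i j => pderiv (Sum.inr j) (f i)

/-- `Q(x,y) := det C(x,y)`. -/
def jacQ {k : Type*} [Field k] {n l : ℕ} (f : Fin l → MvPolynomial (Fin n ⊕ Fin l) k) :
    MvPolynomial (Fin n ⊕ Fin l) k :=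
  (jacC f).det

/-- In the polynomial ring `k[x,y,ξ,η]` (variables indexed by
`(Fin n ⊕ Fin l) ⊕ (Fin n ⊕ Fin l)`, the first summand being the `(x,y)`-variables and the
second the `(ξ,η)`-variables), the substitution sending `x_i ↦ x_i + Q(x,y)^r·ξ_i` and
`y_j ↦ y_j + Q(x,y)^(r-1)·η_j`. -/
def newtonSubst {k : Type*} [Field k] {n l : ℕ} (f : Fin l → MvPolynomial (Fin n ⊕ Fin l) k)
    (r : ℕ) : Fin n ⊕ Fin l → MvPolynomial ((Fin n ⊕ Fin l) ⊕ (Fin n ⊕ Fin l)) k :=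
  fun w => Sum.elim
    (fun i => X (Sum.inl (Sum.inl i)) +
      (rename Sum.inl (jacQ f)) ^ r * X (Sum.inr (Sum.inl i)))
    (fun j => X (Sum.inl (Sum.inr j)) +
      (rename Sum.inl (jacQ f)) ^ (r - 1) * X (Sum.inr (Sum.inr j))) w

/-- The property defining the polynomial (vector) `u(x,y,ξ,η)`:
`Q^r·u = f(x+Q^r ξ, y+Q^(r-1) η) − f(x,y) − Q^(r-1)·C(x,y)·η` in `k[x,y,ξ,η]`. -/
def IsNewtonU {k : Type*} [Field k] {n l : ℕ} (f : Fin l → MvPolynomial (Fin n ⊕ Fin l) k)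
    (r : ℕ) (uP : Fin l → MvPolynomial ((Fin n ⊕ Fin l) ⊕ (Fin n ⊕ Fin l)) k) : Prop :=
  ∀ i, (rename Sum.inl (jacQ f)) ^ r * uP i =
    aeval (newtonSubst f r) (f i) - rename Sum.inl (f i) -
      (rename Sum.inl (jacQ f)) ^ (r - 1) *
        ∑ j : Fin l, rename Sum.inl (jacC f i j) * X (Sum.inr (Sum.inr j))

/-- The property defining the polynomial `v(x,y,ξ,η)`:
`Q·v = Q(x+Q^r ξ, y+Q^(r-1) η)` in `k[x,y,ξ,η]`. -/
def IsNewtonV {k : Type*} [Field k] {n l : ℕ} (f : Fin l → MvPolynomial (Fin n ⊕ Fin l) k)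
    (r : ℕ) (vP : MvPolynomial ((Fin n ⊕ Fin l) ⊕ (Fin n ⊕ Fin l)) k) : Prop :=
  (rename Sum.inl (jacQ f)) * vP = aeval (newtonSubst f r) (jacQ f)

variable {k : Type*} [Field k] {n l : ℕ}

/-- Evaluation of the Jacobian matrix `C` at a point `(x,y)`. -/
def CAt (f : Fin l → MvPolynomial (Fin n ⊕ Fin l) k) {S : Type*} [CommRing S] [Algebra k S]
    (x : Fin n → S) (y : Fin l → S) : Matrix (Fin l) (Fin l) S :=
  Matrix.of fun i j => aeval (Sum.elim x y) (jacC f i j)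

/-- Evaluation of a polynomial in `k[x,y,ξ,η]` at a point `(x,y,ξ,η)`. -/
def evalXYΞΗ {S : Type*} [CommRing S] [Algebra k S]
    (x : Fin n → S) (y : Fin l → S) (ξ : Fin n → S) (η : Fin l → S)
    (p : MvPolynomial ((Fin n ⊕ Fin l) ⊕ (Fin n ⊕ Fin l)) k) : S :=
  aeval (Sum.elim (Sum.elim x y) (Sum.elim ξ η)) p

/-- The set `G(R)` of the fiber of the Newton groupoid over the `k`-point `(x₀,y₀)`:
pairs `(ξ,η)` with `η + Ĉ(x₀,y₀)·u(x₀,y₀,ξ,η) = 0` and `v(x₀,y₀,ξ,η) ∈ R^×`. -/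
def newtonFiber (f : Fin l → MvPolynomial (Fin n ⊕ Fin l) k)
    (uP : Fin l → MvPolynomial ((Fin n ⊕ Fin l) ⊕ (Fin n ⊕ Fin l)) k)
    (vP : MvPolynomial ((Fin n ⊕ Fin l) ⊕ (Fin n ⊕ Fin l)) k)
    (x₀ : Fin n → k) (y₀ : Fin l → k)
    (R : Type*) [CommRing R] [Algebra k R] : Set ((Fin n → R) × (Fin l → R)) :=
  {p | (∀ i, p.2 i +
        (CAt f (fun i' => algebraMap k R (x₀ i'))
          (fun j' => algebraMap k R (y₀ j'))).adjugate.mulVec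
          (fun i' => evalXYΞΗ (fun i'' => algebraMap k R (x₀ i''))
            (fun j'' => algebraMap k R (y₀ j'')) p.1 p.2 (uP i')) i = 0) ∧
      IsUnit (evalXYΞΗ (fun i'' => algebraMap k R (x₀ i''))
        (fun j'' => algebraMap k R (y₀ j'')) p.1 p.2 vP)}

/-- The composition law `(ξ̃,η̃)∘(ξ,η) = (ξ + v(x₀,y₀,ξ,η)^r ξ̃, η + v(x₀,y₀,ξ,η)^(r-1) η̃)`
on the fiber over `(x₀,y₀)`. -/
def newtonFiberOp (r : ℕ)
    (vP : MvPolynomial ((Fin n ⊕ Fin l) ⊕ (Fin n ⊕ Fin l)) k)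
    (x₀ : Fin n → k) (y₀ : Fin l → k)
    {R : Type*} [CommRing R] [Algebra k R]
    (a b : (Fin n → R) × (Fin l → R)) : (Fin n → R) × (Fin l → R) :=
  (fun i => b.1 i + (evalXYΞΗ (fun i'' => algebraMap k R (x₀ i''))
      (fun j'' => algebraMap k R (y₀ j'')) b.1 b.2 vP) ^ r * a.1 i,
   fun j => b.2 j + (evalXYΞΗ (fun i'' => algebraMap k R (x₀ i''))
      (fun j'' => algebraMap k R (y₀ j'')) b.1 b.2 vP) ^ (r - 1) * a.2 j)

/-! ### Newton steps over an arbitrary `k`-algebra -/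

/-- The weight of a coordinate in a Newton step: `r` for `ξ`-coordinates, `r - 1` for
`η`-coordinates. -/
def newtonWt (n l r : ℕ) : Fin n ⊕ Fin l → ℕ :=
  Sum.elim (fun _ => r) (fun _ => r - 1)

/-- The target `(x + Q^r ξ, y + Q^(r-1) η)` of the Newton step with source `z = (x,y)` and
displacement `b = (ξ,η)`. -/
def newtonTarget (f : Fin l → MvPolynomial (Fin n ⊕ Fin l) k) (r : ℕ)
    {S : Type*} [CommRing S] [Algebra k S] (z b : Fin n ⊕ Fin l → S) : Fin n ⊕ Fin l → S :=
  fun w => z w + aeval z (jacQ f) ^ newtonWt n l r w * b w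

/-- The composite of a displacement `a` after a displacement `b` whose multiplier is `v`. -/
def newtonComp (r : ℕ) {S : Type*} [CommRing S] (v : S) (a b : Fin n ⊕ Fin l → S) :
    Fin n ⊕ Fin l → S :=
  fun w => b w + v ^ newtonWt n l r w * a w

/-- The Jacobian matrix evaluated at a point given by a single family of coordinates. -/
def jacAt (f : Fin l → MvPolynomial (Fin n ⊕ Fin l) k) {S : Type*} [CommRing S] [Algebra k S]
    (z : Fin n ⊕ Fin l → S) : Matrix (Fin l) (Fin l) S :=
  (jacC f).map (aeval z)

section Steps

variable {S : Type*} [CommRing S] [Algebra k S]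

theorem det_jacAt (f : Fin l → MvPolynomial (Fin n ⊕ Fin l) k) (z : Fin n ⊕ Fin l → S) :
    (jacAt f z).det = aeval z (jacQ f) := by
  simp only [jacAt, jacQ, AlgHom.map_det, AlgHom.mapMatrix_apply]

theorem jacAt_map {T : Type*} [CommRing T] [Algebra k T] (φ : S →ₐ[k] T)
    (f : Fin l → MvPolynomial (Fin n ⊕ Fin l) k) (z : Fin n ⊕ Fin l → S) :
    (jacAt f z).map φ = jacAt f (fun w => φ (z w)) := by
  ext i j
  simp only [jacAt, Matrix.map_apply, ← AlgHom.comp_apply, comp_aeval]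

theorem aeval_newtonSubst (f : Fin l → MvPolynomial (Fin n ⊕ Fin l) k) (r : ℕ)
    (z b : Fin n ⊕ Fin l → S) (p : MvPolynomial (Fin n ⊕ Fin l) k) :
    aeval (Sum.elim z b) (aeval (newtonSubst f r) p) = aeval (newtonTarget f r z b) p := by
  rw [← AlgHom.comp_apply, comp_aeval]
  congr 2
  funext w
  rcases w with i | j <;>
    simp [newtonSubst, newtonTarget, newtonWt, aeval_rename, Sum.elim_comp_inl]

theorem newtonV_eq {f : Fin l → MvPolynomial (Fin n ⊕ Fin l) k} {r : ℕ}
    {vP : MvPolynomial ((Fin n ⊕ Fin l) ⊕ (Fin n ⊕ Fin l)) k} (hv : IsNewtonV f r vP)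
    (z b : Fin n ⊕ Fin l → S) :
    aeval z (jacQ f) * aeval (Sum.elim z b) vP = aeval (newtonTarget f r z b) (jacQ f) := by
  have h := congrArg (aeval (Sum.elim z b)) hv
  rwa [aeval_newtonSubst, map_mul, aeval_rename, Sum.elim_comp_inl] at h

theorem newtonU_eq {f : Fin l → MvPolynomial (Fin n ⊕ Fin l) k} {r : ℕ}
    {uP : Fin l → MvPolynomial ((Fin n ⊕ Fin l) ⊕ (Fin n ⊕ Fin l)) k} (hu : IsNewtonU f r uP)
    (z b : Fin n ⊕ Fin l → S) (i : Fin l) :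
    aeval z (jacQ f) ^ r * aeval (Sum.elim z b) (uP i) =
      aeval (newtonTarget f r z b) (f i) - aeval z (f i) -
        aeval z (jacQ f) ^ (r - 1) * (jacAt f z *ᵥ fun j => b (Sum.inr j)) i := by
  have h := congrArg (aeval (Sum.elim z b)) (hu i)
  rw [map_sub, map_sub, aeval_newtonSubst] at h
  simpa [aeval_rename, Sum.elim_comp_inl, Matrix.mulVec, dotProduct, jacAt] using h

/-- Composing displacements corresponds to performing the two Newton steps in succession. -/
theorem newtonTarget_comp {f : Fin l → MvPolynomial (Fin n ⊕ Fin l) k} {r : ℕ}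
    {vP : MvPolynomial ((Fin n ⊕ Fin l) ⊕ (Fin n ⊕ Fin l)) k} (hv : IsNewtonV f r vP)
    (z b a : Fin n ⊕ Fin l → S) :
    newtonTarget f r z (newtonComp r (aeval (Sum.elim z b) vP) a b) =
      newtonTarget f r (newtonTarget f r z b) a := by
  funext w
  have h := newtonV_eq hv z b
  rw [newtonTarget, newtonTarget, ← h, newtonTarget, newtonComp, mul_pow]
  ring

/-- Evaluating a polynomial at two points congruent modulo `q` gives congruent values. -/
theorem dvd_aeval_sub {σ : Type*} (q : S) (z z' : σ → S) (h : ∀ w, q ∣ z' w - z w)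
    (p : MvPolynomial σ k) : q ∣ aeval z' p - aeval z p := by
  induction p using MvPolynomial.induction_on with
  | C c => simp
  | add p p' hp hp' =>
    simp only [map_add, add_sub_add_comm]
    exact dvd_add hp hp'
  | mul_X p w hp =>
    simp only [map_mul, aeval_X]
    exact dvd_mul_sub_mul hp (h w)

theorem exists_jac_quotient (f : Fin l → MvPolynomial (Fin n ⊕ Fin l) k) {r : ℕ} (hr : 2 ≤ r)
    (z b : Fin n ⊕ Fin l → S) : ∃ E : Matrix (Fin l) (Fin l) S,
      jacAt f (newtonTarget f r z b) = jacAt f z + aeval z (jacQ f) • E := by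
  have h : ∀ i j, aeval z (jacQ f) ∣
      aeval (newtonTarget f r z b) (jacC f i j) - aeval z (jacC f i j) := by
    intro i j
    refine dvd_aeval_sub _ _ _ (fun w => ?_) _
    have hw : newtonWt n l r w ≠ 0 := by
      rcases w with w | w <;> simp only [newtonWt, Sum.elim_inl, Sum.elim_inr] <;> omega
    simp only [newtonTarget, add_sub_cancel_left]
    exact (dvd_pow_self _ hw).mul_right _
  choose E hE using h
  refine ⟨Matrix.of E, ?_⟩
  ext i j
  simp only [jacAt, Matrix.map_apply, Matrix.add_apply, Matrix.smul_apply, Matrix.of_apply,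
    smul_eq_mul, ← hE]
  ring

/-- At a zero of `Q` every Newton step is stationary; this needs both weights to be positive. -/
theorem newtonTarget_of_zero (f : Fin l → MvPolynomial (Fin n ⊕ Fin l) k) {r : ℕ} (hr : 2 ≤ r)
    (z b : Fin n ⊕ Fin l → S) (hQ : aeval z (jacQ f) = 0) : newtonTarget f r z b = z := by
  funext w
  have hw : newtonWt n l r w ≠ 0 := by
    rcases w with w | w <;> simp only [newtonWt, Sum.elim_inl, Sum.elim_inr] <;> omega
  simp [newtonTarget, hQ, zero_pow hw]

theorem newtonTarget_map {T : Type*} [CommRing T] [Algebra k T] (φ : S →ₐ[k] T)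
    (f : Fin l → MvPolynomial (Fin n ⊕ Fin l) k) (r : ℕ) (z b : Fin n ⊕ Fin l → S) :
    (fun w => φ (newtonTarget f r z b w)) =
      newtonTarget f r (fun w => φ (z w)) (fun w => φ (b w)) := by
  funext w
  have h : φ (aeval z (jacQ f)) = aeval (fun w => φ (z w)) (jacQ f) := by
    rw [← AlgHom.comp_apply, comp_aeval]
  simp [newtonTarget, h]

theorem newtonComp_map {T : Type*} [CommRing T] [Algebra k T] (φ : S →ₐ[k] T)
    (r : ℕ) (v : S) (a b : Fin n ⊕ Fin l → S) :
    (fun w => φ (newtonComp r v a b w)) =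
      newtonComp r (φ v) (fun w => φ (a w)) (fun w => φ (b w)) := by
  funext w
  simp [newtonComp]

theorem aeval_elim_map {T : Type*} [CommRing T] [Algebra k T] (φ : S →ₐ[k] T) {σ τ : Type*}
    (z : σ → S) (b : τ → S) (p : MvPolynomial (σ ⊕ τ) k) :
    φ (aeval (Sum.elim z b) p) =
      aeval (Sum.elim (fun w => φ (z w)) (fun w => φ (b w))) p := by
  rw [← AlgHom.comp_apply, comp_aeval]
  congr 2
  funext w
  rcases w with w | w <;> rfl

end Steps

/-! ### The cocycle relations -/

/-- The relations between the data of two composable Newton steps, over a domain in which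
`Q(z)` can be cancelled. The matrix `E` is `(C(z') - C(z)) / Q(z)`, where `z'` is the target of
the first step. -/
theorem newton_cocycle_domain {S : Type*} [CommRing S] [IsDomain S] [Algebra k S]
    {f : Fin l → MvPolynomial (Fin n ⊕ Fin l) k} {r : ℕ} (hr : 2 ≤ r)
    {uP : Fin l → MvPolynomial ((Fin n ⊕ Fin l) ⊕ (Fin n ⊕ Fin l)) k}
    {vP : MvPolynomial ((Fin n ⊕ Fin l) ⊕ (Fin n ⊕ Fin l)) k}
    (hu : IsNewtonU f r uP) (hv : IsNewtonV f r vP)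
    (z b a : Fin n ⊕ Fin l → S) (hq : aeval z (jacQ f) ≠ 0) :
    aeval (Sum.elim z (newtonComp r (aeval (Sum.elim z b) vP) a b)) vP =
      aeval (Sum.elim z b) vP * aeval (Sum.elim (newtonTarget f r z b) a) vP ∧
    ∃ E : Matrix (Fin l) (Fin l) S,
      (jacAt f z).adjugate * E * (jacAt f (newtonTarget f r z b)).adjugate =
        aeval (Sum.elim z b) vP • (jacAt f z).adjugate -
          (jacAt f (newtonTarget f r z b)).adjugate ∧
      ∀ i, aeval (Sum.elim z (newtonComp r (aeval (Sum.elim z b) vP) a b)) (uP i) =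
        aeval (Sum.elim z b) (uP i) +
          aeval (Sum.elim z b) vP ^ r * aeval (Sum.elim (newtonTarget f r z b) a) (uP i) +
          aeval (Sum.elim z b) vP ^ (r - 1) * (E *ᵥ fun j => a (Sum.inr j)) i := by
  obtain ⟨E, hE⟩ := exists_jac_quotient f hr z b
  have hVb := newtonV_eq hv z b
  refine ⟨mul_left_cancel₀ hq ?_, E, smul_right_injective _ hq ?_, fun i => ?_⟩
  · rw [newtonV_eq hv, newtonTarget_comp hv, ← newtonV_eq hv, ← hVb, mul_assoc]
  · have h1 : (jacAt f z).adjugate * jacAt f (newtonTarget f r z b) *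
        (jacAt f (newtonTarget f r z b)).adjugate =
        (aeval z (jacQ f) * aeval (Sum.elim z b) vP) • (jacAt f z).adjugate := by
      rw [Matrix.mul_assoc, Matrix.mul_adjugate, det_jacAt, hVb, Matrix.mul_smul, Matrix.mul_one]
    nth_rewrite 1 [hE] at h1
    rw [Matrix.mul_add, Matrix.adjugate_mul, det_jacAt, Matrix.add_mul, Matrix.smul_mul,
      Matrix.one_mul, Matrix.mul_smul, Matrix.smul_mul] at h1
    simp only [smul_sub, smul_smul]
    rw [← h1]
    abel
  · have hUc := newtonU_eq hu z (newtonComp r (aeval (Sum.elim z b) vP) a b) i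
    have hUb := newtonU_eq hu z b i
    have hUa := newtonU_eq hu (newtonTarget f r z b) a i
    rw [newtonTarget_comp hv] at hUc
    rw [← hVb, hE] at hUa
    have hη : (fun j => newtonComp r (aeval (Sum.elim z b) vP) a b (Sum.inr j)) =
        (fun j => b (Sum.inr j)) +
          aeval (Sum.elim z b) vP ^ (r - 1) • fun j => a (Sum.inr j) := by
      funext j
      simp [newtonComp, newtonWt]
    rw [hη, Matrix.mulVec_add, Matrix.mulVec_smul] at hUc
    rw [Matrix.add_mulVec, Matrix.smul_mulVec] at hUa
    simp only [Pi.add_apply, Pi.smul_apply, smul_eq_mul, mul_pow] at hUc hUa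
    refine mul_left_cancel₀ (pow_ne_zero r hq) ?_
    obtain ⟨s, rfl⟩ : ∃ s, r = s + 1 := ⟨r - 1, by omega⟩
    simp only [Nat.add_sub_cancel] at *
    linear_combination hUc - hUb - hUa

/-- The cocycle relations at a zero `z` of `Q`, transported along a homomorphism from a domain in
which `z`, `b`, `a` lift to data with `Q ≠ 0`. -/
theorem newton_cocycle_of_hom {S : Type*} [CommRing S] [IsDomain S] [Algebra k S] {R : Type*} [CommRing R] [Algebra k R]
    {f : Fin l → MvPolynomial (Fin n ⊕ Fin l) k} {r : ℕ} (hr : 2 ≤ r)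
    {uP : Fin l → MvPolynomial ((Fin n ⊕ Fin l) ⊕ (Fin n ⊕ Fin l)) k}
    {vP : MvPolynomial ((Fin n ⊕ Fin l) ⊕ (Fin n ⊕ Fin l)) k}
    (hu : IsNewtonU f r uP) (hv : IsNewtonV f r vP)
    (φ : S →ₐ[k] R) (Z B A : Fin n ⊕ Fin l → S) (hq : aeval Z (jacQ f) ≠ 0)
    {z b a : Fin n ⊕ Fin l → R} (hQ : aeval z (jacQ f) = 0) (hφZ : (fun w => φ (Z w)) = z)
    (hφB : (fun w => φ (B w)) = b) (hφA : (fun w => φ (A w)) = a) :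
    aeval (Sum.elim z (newtonComp r (aeval (Sum.elim z b) vP) a b)) vP =
      aeval (Sum.elim z b) vP * aeval (Sum.elim z a) vP ∧
    ∃ E : Matrix (Fin l) (Fin l) R,
      (jacAt f z).adjugate * E * (jacAt f z).adjugate =
        aeval (Sum.elim z b) vP • (jacAt f z).adjugate - (jacAt f z).adjugate ∧
      ∀ i, aeval (Sum.elim z (newtonComp r (aeval (Sum.elim z b) vP) a b)) (uP i) =
        aeval (Sum.elim z b) (uP i) +
          aeval (Sum.elim z b) vP ^ r * aeval (Sum.elim z a) (uP i) +
          aeval (Sum.elim z b) vP ^ (r - 1) * (E *ᵥ fun j => a (Sum.inr j)) i := by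
  have hφT : (fun w => φ (newtonTarget f r Z B w)) = z := by
    rw [newtonTarget_map, hφZ, hφB, newtonTarget_of_zero f hr z b hQ]
  obtain ⟨h1, E, h2, h3⟩ := newton_cocycle_domain hr hu hv Z B A hq
  have hadj : ∀ y : Fin n ⊕ Fin l → S, ((jacAt f y).adjugate).map φ =
      (jacAt f (fun w => φ (y w))).adjugate := by
    intro y
    rw [← jacAt_map]
    exact AlgHom.map_adjugate φ _
  refine ⟨?_, E.map φ, ?_, fun i => ?_⟩
  · have h := congrArg φ h1
    simpa only [map_mul, aeval_elim_map, newtonComp_map, hφZ, hφB, hφA, hφT] using h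
  · have h := congrArg (fun M : Matrix (Fin l) (Fin l) S => M.map φ) h2
    simp only [Matrix.map_mul, hadj, hφZ, hφT] at h
    rw [h]
    ext i j
    have e1 := congrFun (congrFun (hadj Z) i) j
    have e2 := congrFun (congrFun (hadj (newtonTarget f r Z B)) i) j
    rw [hφZ] at e1
    rw [hφT] at e2
    simp only [Matrix.map_apply] at e1 e2
    simp only [Matrix.map_apply, Matrix.sub_apply, Matrix.smul_apply, smul_eq_mul, map_sub,
      map_mul, aeval_elim_map, hφZ, hφB, e1, e2]
  · have h := congrArg φ (h3 i)
    have hE : φ ((E *ᵥ fun j => A (Sum.inr j)) i) =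
        (E.map φ *ᵥ fun j => a (Sum.inr j)) i := by
      rw [← hφA]
      simp [Matrix.mulVec, dotProduct]
    simpa only [map_mul, map_add, map_pow, hE, aeval_elim_map, newtonComp_map, hφZ, hφB, hφA, hφT]
      using h

/-- The cocycle relations at a zero `z` of `Q` in an arbitrary `k`-algebra, where the two steps
have the same base point. -/
theorem newton_cocycle {R : Type*} [CommRing R] [Algebra k R]
    {f : Fin l → MvPolynomial (Fin n ⊕ Fin l) k} (hQ0 : jacQ f ≠ 0) {r : ℕ} (hr : 2 ≤ r)
    {uP : Fin l → MvPolynomial ((Fin n ⊕ Fin l) ⊕ (Fin n ⊕ Fin l)) k}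
    {vP : MvPolynomial ((Fin n ⊕ Fin l) ⊕ (Fin n ⊕ Fin l)) k}
    (hu : IsNewtonU f r uP) (hv : IsNewtonV f r vP)
    (z : Fin n ⊕ Fin l → R) (hQ : aeval z (jacQ f) = 0) (b a : Fin n ⊕ Fin l → R) :
    aeval (Sum.elim z (newtonComp r (aeval (Sum.elim z b) vP) a b)) vP =
      aeval (Sum.elim z b) vP * aeval (Sum.elim z a) vP ∧
    ∃ E : Matrix (Fin l) (Fin l) R,
      (jacAt f z).adjugate * E * (jacAt f z).adjugate =
        aeval (Sum.elim z b) vP • (jacAt f z).adjugate - (jacAt f z).adjugate ∧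
      ∀ i, aeval (Sum.elim z (newtonComp r (aeval (Sum.elim z b) vP) a b)) (uP i) =
        aeval (Sum.elim z b) (uP i) +
          aeval (Sum.elim z b) vP ^ r * aeval (Sum.elim z a) (uP i) +
          aeval (Sum.elim z b) vP ^ (r - 1) * (E *ᵥ fun j => a (Sum.inr j)) i := by
  -- The universal case: three independent blocks of variables `z`, `b`, `a`.
  refine newton_cocycle_of_hom
    (S := MvPolynomial ((Fin n ⊕ Fin l) ⊕ ((Fin n ⊕ Fin l) ⊕ (Fin n ⊕ Fin l))) k) hr hu hv
    (aeval (Sum.elim z (Sum.elim b a))) (fun w => X (Sum.inl w)) (fun w => X (Sum.inr (Sum.inl w)))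
    (fun w => X (Sum.inr (Sum.inr w))) ?_ hQ ?_ ?_ ?_
  · change aeval (X ∘ Sum.inl) (jacQ f) ≠ 0
    rw [← rename_eq_aeval]
    exact (map_ne_zero_iff _ (rename_injective _ Sum.inl_injective)).mpr hQ0
  all_goals
    funext w
    simp

/-- The zero displacement has trivial multiplier and trivial remainder, at every base point. -/
theorem newton_zero {R : Type*} [CommRing R] [Algebra k R]
    {f : Fin l → MvPolynomial (Fin n ⊕ Fin l) k} (hQ0 : jacQ f ≠ 0) {r : ℕ}
    {uP : Fin l → MvPolynomial ((Fin n ⊕ Fin l) ⊕ (Fin n ⊕ Fin l)) k}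
    {vP : MvPolynomial ((Fin n ⊕ Fin l) ⊕ (Fin n ⊕ Fin l)) k}
    (hu : IsNewtonU f r uP) (hv : IsNewtonV f r vP) (z : Fin n ⊕ Fin l → R) :
    aeval (Sum.elim z 0) vP = 1 ∧ ∀ i, aeval (Sum.elim z 0) (uP i) = 0 := by
  -- It suffices to treat the generic point, where `Q` can be cancelled.
  let Z : Fin n ⊕ Fin l → MvPolynomial (Fin n ⊕ Fin l) k := X
  have hZ : aeval Z (jacQ f) = jacQ f := aeval_X_left_apply _
  have hT : newtonTarget f r Z 0 = Z := by funext w; simp [newtonTarget]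
  have hφZ : (fun w => aeval z (Z w)) = z := by funext w; simp [Z]
  have hφ0 : (fun w : Fin n ⊕ Fin l =>
      aeval z ((0 : Fin n ⊕ Fin l → MvPolynomial (Fin n ⊕ Fin l) k) w)) = 0 := by
    funext w; simp
  have hV : aeval (Sum.elim Z 0) vP = 1 := by
    refine mul_left_cancel₀ hQ0 ?_
    have h := newtonV_eq hv Z 0
    rw [hT, hZ] at h
    rw [h, mul_one]
  have hU : ∀ i, aeval (Sum.elim Z 0) (uP i) = 0 := by
    intro i
    refine mul_left_cancel₀ (pow_ne_zero r hQ0) ?_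
    have h := newtonU_eq hu Z 0 i
    rw [hT, hZ] at h
    rw [h]
    simp [Matrix.mulVec, dotProduct]
  refine ⟨?_, fun i => ?_⟩
  · have h := congrArg (aeval z) hV
    rwa [aeval_elim_map, hφZ, hφ0, map_one] at h
  · have h := congrArg (aeval z) (hU i)
    rwa [aeval_elim_map, hφZ, hφ0, map_zero] at h

/-! ### The linear algebra of the membership equation -/

/-- If `η ∈ im Ĉ` and `Ĉ E Ĉ = (v - 1) Ĉ`, then `Ĉ E η = (v - 1) η`. -/
theorem adj_mulVec_of_image {R : Type*} [CommRing R] {M E : Matrix (Fin l) (Fin l) R} {v : R}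
    (hE : M * E * M = v • M - M) {η : Fin l → R} (hη : ∃ w, η = M *ᵥ w) :
    M *ᵥ (E *ᵥ η) = v • η - η := by
  obtain ⟨w, rfl⟩ := hη
  rw [Matrix.mulVec_mulVec, Matrix.mulVec_mulVec, hE, Matrix.sub_mulVec, Matrix.smul_mulVec]

/-- The defect of the equation `η + Ĉ u = 0` for a composite, in terms of the defects of the two
factors. -/
theorem newton_defect {R : Type*} [CommRing R] {M E : Matrix (Fin l) (Fin l) R} {v : R} {r : ℕ}
    (hr : 2 ≤ r) (hE : M * E * M = v • M - M) {ηa ηb ua ub uc : Fin l → R}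
    (hη : ∃ w, ηa = M *ᵥ w) (huc : uc = ub + v ^ r • ua + v ^ (r - 1) • (E *ᵥ ηa)) :
    (ηb + v ^ (r - 1) • ηa) + M *ᵥ uc = (ηb + M *ᵥ ub) + v ^ r • (ηa + M *ᵥ ua) := by
  obtain ⟨s, rfl⟩ : ∃ s, r = s + 1 := ⟨r - 1, by omega⟩
  rw [huc, Matrix.mulVec_add, Matrix.mulVec_add, Matrix.mulVec_smul, Matrix.mulVec_smul,
    adj_mulVec_of_image hE hη]
  funext i
  simp only [Nat.add_sub_cancel, Pi.add_apply, Pi.smul_apply, Pi.sub_apply, smul_eq_mul]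
  ring

/-! ### The group -/

/-- **The fiber of the Newton groupoid over a point of the different is a group.**
Fix `r ≥ 2` and a `k`-point `(x₀,y₀)` with `f(x₀,y₀) = 0` and `Q(x₀,y₀) = 0`.
Then `∘` maps `G(R) × G(R)` into `G(R)` and makes `G(R)` a group with identity `(0,0)`. -/
theorem newton_fiber_group (hn : 1 ≤ n) (hl : 1 ≤ l)
    (f : Fin l → MvPolynomial (Fin n ⊕ Fin l) k) (hQ0 : jacQ f ≠ 0) (r : ℕ) (hr : 2 ≤ r)
    (uP : Fin l → MvPolynomial ((Fin n ⊕ Fin l) ⊕ (Fin n ⊕ Fin l)) k)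
    (vP : MvPolynomial ((Fin n ⊕ Fin l) ⊕ (Fin n ⊕ Fin l)) k)
    (hu : IsNewtonU f r uP) (hv : IsNewtonV f r vP)
    (x₀ : Fin n → k) (y₀ : Fin l → k)
    (hf : ∀ i, aeval (Sum.elim x₀ y₀) (f i) = 0)
    (hQ : aeval (Sum.elim x₀ y₀) (jacQ f) = 0)
    (R : Type*) [CommRing R] [Algebra k R] :
    (∀ a b, a ∈ newtonFiber f uP vP x₀ y₀ R → b ∈ newtonFiber f uP vP x₀ y₀ R →
      newtonFiberOp r vP x₀ y₀ a b ∈ newtonFiber f uP vP x₀ y₀ R) ∧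
    ((0, 0) ∈ newtonFiber f uP vP x₀ y₀ R) ∧
    (∀ a, a ∈ newtonFiber f uP vP x₀ y₀ R →
      newtonFiberOp r vP x₀ y₀ a (0, 0) = a ∧ newtonFiberOp r vP x₀ y₀ (0, 0) a = a) ∧
    (∀ a b c, a ∈ newtonFiber f uP vP x₀ y₀ R → b ∈ newtonFiber f uP vP x₀ y₀ R →
      c ∈ newtonFiber f uP vP x₀ y₀ R →
      newtonFiberOp r vP x₀ y₀ (newtonFiberOp r vP x₀ y₀ a b) c =
        newtonFiberOp r vP x₀ y₀ a (newtonFiberOp r vP x₀ y₀ b c)) ∧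
    (∀ a, a ∈ newtonFiber f uP vP x₀ y₀ R → ∃ b, b ∈ newtonFiber f uP vP x₀ y₀ R ∧
      newtonFiberOp r vP x₀ y₀ a b = (0, 0) ∧ newtonFiberOp r vP x₀ y₀ b a = (0, 0)) := by
  set z : Fin n ⊕ Fin l → R :=
    Sum.elim (fun i => algebraMap k R (x₀ i)) (fun j => algebraMap k R (y₀ j))
  have hz' : z = fun w => algebraMap k R (Sum.elim x₀ y₀ w) := by
    funext w
    rcases w with w | w <;> rfl
  have hQz : aeval z (jacQ f) = 0 := by
    have h := congrArg (Algebra.ofId k R) hQ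
    rw [← AlgHom.comp_apply, comp_aeval, map_zero] at h
    rw [hz']
    exact h
  let J := (Fin n → R) × (Fin l → R)
  let V : J → R := fun p => aeval (Sum.elim z (Sum.elim p.1 p.2)) vP
  let U : J → Fin l → R := fun p i => aeval (Sum.elim z (Sum.elim p.1 p.2)) (uP i)
  let M : Matrix (Fin l) (Fin l) R := (jacAt f z).adjugate
  let op : J → J → J := newtonFiberOp r vP x₀ y₀
  have hop : ∀ a b : J, op a b = (b.1 + V b ^ r • a.1, b.2 + V b ^ (r - 1) • a.2) :=
    fun a b => rfl
  have hmem : ∀ p : J, p ∈ newtonFiber f uP vP x₀ y₀ R ↔ p.2 + M *ᵥ U p = 0 ∧ IsUnit (V p) :=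
    fun p => and_congr_left' funext_iff.symm
  have hcomp : ∀ a b : J, newtonComp r (V b) (Sum.elim a.1 a.2) (Sum.elim b.1 b.2) =
      Sum.elim (op a b).1 (op a b).2 := by
    intro a b
    funext w
    rcases w with w | w <;> rfl
  have key := fun a b : J => newton_cocycle hQ0 hr hu hv z hQz
    (Sum.elim b.1 b.2) (Sum.elim a.1 a.2)
  have hV : ∀ a b : J, V (op a b) = V b * V a := by
    intro a b
    have h := (key a b).1
    rwa [hcomp a b] at h
  have hdefect : ∀ a b : J, (∃ w, a.2 = M *ᵥ w) →
      (op a b).2 + M *ᵥ U (op a b) = (b.2 + M *ᵥ U b) + V b ^ r • (a.2 + M *ᵥ U a) := by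
    intro a b ha
    obtain ⟨-, E, hE, hUc⟩ := key a b
    rw [hcomp a b] at hUc
    exact newton_defect hr hE ha (funext hUc)
  have himg : ∀ a : J, a.2 + M *ᵥ U a = 0 → a.2 = M *ᵥ (-U a) := by
    intro a ha
    rw [Matrix.mulVec_neg]
    exact eq_neg_of_add_eq_zero_left ha
  have h0elim : Sum.elim (0 : J).1 (0 : J).2 = 0 := by
    funext w
    rcases w with w | w <;> rfl
  obtain ⟨hv0, hu0⟩ := newton_zero hQ0 hu hv z
  have hV0 : V 0 = 1 := by
    simp only [V, h0elim, hv0]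
  have hU0 : U 0 = 0 := by
    funext i
    simp only [U, h0elim, hu0, Pi.zero_apply]
  have hmem0 : (0 : J).2 + M *ᵥ U 0 = 0 := by
    simp [hU0]
  refine ⟨fun a b ha hb => ?_, ?_, fun a _ => ⟨?_, ?_⟩, fun a b c _ _ _ => ?_, fun a ha => ?_⟩
  · rw [hmem] at ha hb
    refine (hmem _).mpr ⟨?_, ?_⟩
    · exact (hdefect a b ⟨_, himg a ha.1⟩).trans (by rw [ha.1, hb.1, smul_zero, add_zero])
    · exact (hV a b).symm ▸ hb.2.mul ha.2
  · exact (hmem 0).mpr ⟨hmem0, by rw [hV0]; exact isUnit_one⟩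
  · refine (hop a 0).trans ?_
    simp [hV0]
  · refine (hop 0 a).trans ?_
    simp
  · change op (op a b) c = op a (op b c)
    rw [hop (op a b) c, hop a (op b c), hop a b, hV b c, hop b c]
    simp only [smul_add, smul_smul, mul_pow, add_assoc]
  · rw [hmem] at ha
    obtain ⟨ha1, t, ht⟩ := ha
    have htv : (↑t⁻¹ : R) * V a = 1 := by rw [← ht]; exact t.inv_mul
    have hvt : V a * (↑t⁻¹ : R) = 1 := by rw [← ht]; exact t.mul_inv
    -- The left inverse is forced by solving `op b a = 0` for `b`.
    let b : J := (-((↑t⁻¹ : R) ^ r • a.1), -((↑t⁻¹ : R) ^ (r - 1) • a.2))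
    have hba : op b a = 0 := by
      rw [hop]
      ext i <;> simp [b, ← mul_assoc, ← mul_pow, hvt]
    have hVb : V b = ↑t⁻¹ := by
      have h := hV b a
      rw [hba, hV0] at h
      calc V b = ↑t⁻¹ * V a * V b := by rw [htv, one_mul]
        _ = ↑t⁻¹ := by rw [mul_assoc, ← h, mul_one]
    have hab : op a b = 0 := by
      rw [hop, hVb]
      ext i <;> simp [b]
    refine ⟨b, (hmem b).mpr ⟨?_, hVb ▸ t⁻¹.isUnit⟩, hab, hba⟩
    -- The defect of `op b a = 0` vanishes, and it is `V a ^ r` times that of `b`.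
    have hb2 : ∃ w, b.2 = M *ᵥ w := by
      refine ⟨(↑t⁻¹ : R) ^ (r - 1) • U a, ?_⟩
      have h := himg a ha1
      simp only [b]
      rw [h, Matrix.mulVec_smul, Matrix.mulVec_neg, smul_neg, neg_neg]
    have h := hdefect b a hb2
    rw [hba, hmem0, ha1, zero_add] at h
    calc b.2 + M *ᵥ U b = (↑t⁻¹ : R) ^ r • V a ^ r • (b.2 + M *ᵥ U b) := by
          rw [smul_smul, ← mul_pow, htv, one_pow, one_smul]
      _ = 0 := by rw [← h, smul_zero]

end
end
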